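/- Let U ⊂ ℝ^d be open, let Φ : U → ℝ be smooth with Δ²Φ = 0 on U, let u : U → ℝ be smooth, let n ∈ ℝ^d be a fixed vector, and let j, k ∈ {1, …, d}. Then at every point of U: Σ_{ℓ=1}^d n_ℓ D_ℓ(ΔD_jD_kΦ)·u − ΔD_jD_kΦ·Σ_{ℓ=1}^d n_ℓ D_ℓ u = Σ_{ℓ=1}^d [ (n_ℓ D_j − n_j D_ℓ)(D_ℓ ΔD_k Φ · u) − (n_ℓ D_k − n_k D_ℓ)(D_ℓ ΔΦ · D_j u) + D_ℓ ΔΦ · (n_ℓ D_k − n_k D_ℓ)(D_j u) + (n_j D_ℓ − n_ℓ D_j)(ΔD_k Φ · D_ℓ u) − ΔD_k Φ · (n_j D_ℓ − n_ℓ D_j)(D_ℓ u) ]. -/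

import Mathlib

open MeasureTheory Metric Filter Set
open scoped ENNReal NNReal Topology RealInnerProductSpace

noncomputable section

/-- Euclidean space `ℝ^d`. -/
abbrev Euc (d : ℕ) := EuclideanSpace ℝ (Fin d)

variable {d : ℕ}

/-- The partial derivative `D_i u` in the `i`-th coordinate direction. -/
def pder (i : Fin d) (u : Euc d → ℝ) : Euc d → ℝ :=
  fun x => fderiv ℝ u x (EuclideanSpace.single i 1)

/-- The Laplacian `Δu = ∑ i, D_i D_i u`. -/
def lap (u : Euc d → ℝ) : Euc d → ℝ := fun x => ∑ i, pder i (pder i u) x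

/-- The bilaplacian `Δ²u`. -/
def bilap (u : Euc d → ℝ) : Euc d → ℝ := lap (lap u)

/-- `u` is biharmonic in the open set `Ω` : it is smooth there and `Δ²u = 0`. -/
def Biharmonic (Ω : Set (Euc d)) (u : Euc d → ℝ) : Prop :=
  ContDiffOn ℝ (⊤ : ℕ∞) u Ω ∧ ∀ x ∈ Ω, bilap u x = 0

/-- `|∇u|`. -/
def gnorm1 (u : Euc d → ℝ) : Euc d → ℝ :=
  fun x => Real.sqrt (∑ i, (pder i u x) ^ 2)

/-- `|∇²u|`. -/
def gnorm2 (u : Euc d → ℝ) : Euc d → ℝ :=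
  fun x => Real.sqrt (∑ i, ∑ j, (pder i (pder j u) x) ^ 2)

/-- `|∇³u|`. -/
def gnorm3 (u : Euc d → ℝ) : Euc d → ℝ :=
  fun x => Real.sqrt (∑ i, ∑ j, ∑ k, (pder i (pder j (pder k u)) x) ^ 2)

/-- The last ("vertical") coordinate `x_d` of a point of `ℝ^d`. -/
def vertCoord (d : ℕ) (x : Euc d) : ℝ :=
  if h : 0 < d then x ⟨d - 1, Nat.sub_lt h one_pos⟩ else 0

/-- The vertical unit vector `e_d`. -/
def vertDir (d : ℕ) : Euc d :=
  if h : 0 < d then EuclideanSpace.single ⟨d - 1, Nat.sub_lt h one_pos⟩ 1 else 0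

/-- The horizontal coordinates `x′` of a point of `ℝ^d`. -/
def graphCoord (d : ℕ) (x : Euc d) : Euc (d - 1) :=
  WithLp.toLp 2 fun i => x (Fin.castLE (Nat.sub_le d 1) i)

/-- The partial derivative `D_d u` in the vertical direction. -/
def pdLast (u : Euc d → ℝ) : Euc d → ℝ := fun x => fderiv ℝ u x (vertDir d)

/-- A bounded Lipschitz domain: a bounded connected open set whose boundary is covered by
finitely many open sets, in each of which, after a rigid motion, the boundary is the graph of
a Lipschitz function and the domain lies above the graph. -/
def IsLipschitzDomain (Ω : Set (Euc d)) : Prop :=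
  IsOpen Ω ∧ Bornology.IsBounded Ω ∧ IsConnected Ω ∧
  ∃ (N : ℕ) (U : Fin N → Set (Euc d)),
    (∀ i, IsOpen (U i)) ∧ (frontier Ω ⊆ ⋃ i, U i) ∧
    ∀ i, ∃ (R : Euc d ≃ᵢ Euc d) (M : ℝ≥0) (η : Euc (d - 1) → ℝ),
      LipschitzWith M η ∧
      U i ∩ Ω = U i ∩ (R ⁻¹' {x | η (graphCoord d x) < vertCoord d x}) ∧
      U i ∩ frontier Ω = U i ∩ (R ⁻¹' {x | vertCoord d x = η (graphCoord d x)})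

/-- The nontangential approach cone (aperture 1) with vertex `Q ∈ ∂Ω`. -/
def ntCone (Ω : Set (Euc d)) (Q : Euc d) : Set (Euc d) :=
  {x | x ∈ Ω ∧ dist x Q < 2 * Metric.infDist x (frontier Ω)}

/-- The nontangential maximal function `(w)*`. -/
def ntMax (Ω : Set (Euc d)) (w : Euc d → ℝ) (Q : Euc d) : ℝ≥0∞ :=
  ⨆ x ∈ ntCone Ω Q, (‖w x‖₊ : ℝ≥0∞)

/-- `w` has nontangential limit `L` at the boundary point `Q`. -/
def NTLim (Ω : Set (Euc d)) (w : Euc d → ℝ) (Q : Euc d) (L : ℝ) : Prop :=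
  Filter.Tendsto w (nhdsWithin Q (ntCone Ω Q)) (nhds L)

/-- The surface measure on `∂Ω`: the `(d-1)`-dimensional Hausdorff measure restricted
to the boundary. -/
def sMeasure (Ω : Set (Euc d)) : Measure (Euc d) :=
  (μH[(d : ℝ) - 1]).restrict (frontier Ω)

/-- The `L^p(∂Ω)` norm of the nontangential maximal function of `w`. -/
def ntMaxLp (Ω : Set (Euc d)) (w : Euc d → ℝ) (p : ℝ) : ℝ≥0∞ :=
  (∫⁻ Q, (ntMax Ω w Q) ^ p ∂(sMeasure Ω)) ^ (1 / p)

/-- The `L^p(∂Ω, σ)` norm of a function. -/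
def bLp (Ω : Set (Euc d)) (f : Euc d → ℝ) (p : ℝ) : ℝ≥0∞ :=
  eLpNorm f (ENNReal.ofReal p) (sMeasure Ω)

/-- A test function: smooth with compact support in `ℝ^d`. -/
def TestFun (f : Euc d → ℝ) : Prop := ContDiff ℝ (⊤ : ℕ∞) f ∧ HasCompactSupport f

/-- `u` has boundary data `(D^α f)_{|α| ≤ 1}` in the sense of nontangential convergence
`σ`-a.e. on `∂Ω`. -/
def HasBVals1 (Ω : Set (Euc d)) (u f : Euc d → ℝ) : Prop :=
  ∀ᵐ Q ∂(sMeasure Ω), NTLim Ω u Q (f Q) ∧ ∀ i, NTLim Ω (pder i u) Q (pder i f Q)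

/-- `n` is the (σ-a.e. defined) outward unit normal of `Ω`, characterized by the
Gauss–Green formula. -/
def IsOutwardNormal (Ω : Set (Euc d)) (n : Euc d → Euc d) : Prop :=
  (∀ᵐ Q ∂(sMeasure Ω), ‖n Q‖ = 1) ∧
  ∀ φ : Euc d → Euc d, ContDiff ℝ (⊤ : ℕ∞) φ → HasCompactSupport φ →
    ∫ x in Ω, (∑ i, pder i (fun y => φ y i) x) = ∫ Q, (inner ℝ (φ Q) (n Q) : ℝ) ∂(sMeasure Ω)

/-- `|∇_t h|`, the norm of the tangential gradient `∇h − (∇h·n)n` of `h` on `∂Ω`. -/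
def tgradNorm (n : Euc d → Euc d) (h : Euc d → ℝ) (Q : Euc d) : ℝ :=
  Real.sqrt (∑ i, (pder i h Q - (∑ j, n Q j * pder j h Q) * n Q i) ^ 2)

/-- `|∇_t ∇f|`, the norm of the tangential gradient of the full gradient of `f`. -/
def tgrad2Norm (n : Euc d → Euc d) (f : Euc d → ℝ) (Q : Euc d) : ℝ :=
  Real.sqrt (∑ k, (tgradNorm n (pder k f) Q) ^ 2)

/-- Unique solvability of the `L^q` Dirichlet problem `(D)_q` for `Δ²u = 0` in `Ω`:
existence, with uniform estimate, of solutions with Whitney-array boundary data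
`(D^α f)_{|α|≤1}`, together with uniqueness. -/
def DirichletSolvable (Ω : Set (Euc d)) (q : ℝ) : Prop :=
  (∃ C : ℝ≥0, ∀ f : Euc d → ℝ, TestFun f →
    ∃ u : Euc d → ℝ, Biharmonic Ω u ∧ ntMaxLp Ω (gnorm1 u) q < ⊤ ∧ HasBVals1 Ω u f ∧
      ntMaxLp Ω (gnorm1 u) q + ntMaxLp Ω u q ≤
        C * (bLp Ω f q + ∑ i : Fin d, bLp Ω (pder i f) q)) ∧
  (∀ u : Euc d → ℝ, Biharmonic Ω u → ntMaxLp Ω (gnorm1 u) q < ⊤ →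
    HasBVals1 Ω u (fun _ => 0) → ∀ x ∈ Ω, u x = 0)

/-- Unique solvability of the `L^p` regularity problem `(R)_p` for `Δ²u = 0` in `Ω`:
existence, with uniform estimate, of solutions with Whitney-array boundary data
`(D^α g)_{|α|≤2}`, together with uniqueness. -/
def RegularitySolvable (Ω : Set (Euc d)) (p : ℝ) : Prop :=
  (∃ (n : Euc d → Euc d) (C : ℝ≥0), IsOutwardNormal Ω n ∧
    ∀ g : Euc d → ℝ, TestFun g →
    ∃ u : Euc d → ℝ, Biharmonic Ω u ∧ ntMaxLp Ω (gnorm2 u) p < ⊤ ∧ HasBVals1 Ω u g ∧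
      ntMaxLp Ω (gnorm2 u) p ≤
        C * ((∑ i : Fin d, bLp Ω (tgradNorm n (pder i g)) p) + bLp Ω g p +
          ∑ i : Fin d, bLp Ω (pder i g) p)) ∧
  (∀ u : Euc d → ℝ, Biharmonic Ω u → ntMaxLp Ω (gnorm2 u) p < ⊤ →
    HasBVals1 Ω u (fun _ => 0) → ∀ x ∈ Ω, u x = 0)

/-- `u` is the solution of the `L²` regularity problem in `Ω` with boundary data
`(D^α f)_{|α|≤1}`. -/
def IsL2Sol (Ω : Set (Euc d)) (f u : Euc d → ℝ) : Prop :=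
  Biharmonic Ω u ∧ ntMaxLp Ω (gnorm2 u) 2 < ⊤ ∧ HasBVals1 Ω u f

open Classical in
/-- The solution of the `L²` regularity problem with data `f` (junk value if none exists). -/
def L2Sol (Ω : Set (Euc d)) (f : Euc d → ℝ) : Euc d → ℝ :=
  if h : ∃ u, IsL2Sol Ω f u then h.choose else 0

/-- The bilinear form `Λ[f,g] = −∫_Ω Δu·Δv`, where `u, v` solve the `L²` regularity
problem with data `f, g`. -/
def biForm (Ω : Set (Euc d)) (f g : Euc d → ℝ) : ℝ :=
  - ∫ x in Ω, lap (L2Sol Ω f) x * lap (L2Sol Ω g) x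

/-- The bilinear estimate `|Λ[f,g]| ≤ C (‖∇_t∇f‖_p + ‖∇f‖_p + ‖f‖_p)(‖∇g‖_q + ‖g‖_q)`
for all test functions `f, g`. -/
def BilinearEstimate (Ω : Set (Euc d)) (p q : ℝ) : Prop :=
  ∃ (n : Euc d → Euc d) (C : ℝ≥0), IsOutwardNormal Ω n ∧
    ∀ f g : Euc d → ℝ, TestFun f → TestFun g →
      (‖biForm Ω f g‖₊ : ℝ≥0∞) ≤
        C * (bLp Ω (tgrad2Norm n f) p + bLp Ω (gnorm1 f) p + bLp Ω f p) *
          (bLp Ω (gnorm1 g) q + bLp Ω g q)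

section PartialDerivatives

variable {U : Set (Euc d)} {f g : Euc d → ℝ} {x : Euc d}

theorem ContDiffOn.pder (hU : IsOpen U) (hf : ContDiffOn ℝ (⊤ : ℕ∞) f U) (i : Fin d) :
    ContDiffOn ℝ (⊤ : ℕ∞) (pder i f) U :=
  (hf.fderiv_of_isOpen hU (by simp)).clm_apply contDiffOn_const

theorem ContDiffOn.lap (hU : IsOpen U) (hf : ContDiffOn ℝ (⊤ : ℕ∞) f U) :
    ContDiffOn ℝ (⊤ : ℕ∞) (lap f) U :=
  ContDiffOn.sum fun i _ => (hf.pder hU i).pder hU i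

theorem ContDiffOn.differentiableAt_of_isOpen (hU : IsOpen U)
    (hf : ContDiffOn ℝ (⊤ : ℕ∞) f U) (hx : x ∈ U) : DifferentiableAt ℝ f x :=
  (hf.contDiffAt (hU.mem_nhds hx)).differentiableAt (by simp)

theorem Set.EqOn.pder (hU : IsOpen U) (h : EqOn f g U) (i : Fin d) :
    EqOn (pder i f) (pder i g) U := fun x hx => by
  have hfg : f =ᶠ[𝓝 x] g := h.eventuallyEq_of_mem (hU.mem_nhds hx)
  simp only [_root_.pder, hfg.fderiv_eq]

theorem Set.EqOn.lap (hU : IsOpen U) (h : EqOn f g U) : EqOn (lap f) (lap g) U :=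
  fun _ hx => Finset.sum_congr rfl fun i _ => (h.pder hU i).pder hU i hx

theorem pder_mul (hf : DifferentiableAt ℝ f x) (hg : DifferentiableAt ℝ g x) (i : Fin d) :
    pder i (fun y => f y * g y) x = pder i f x * g x + f x * pder i g x := by
  simp only [pder, fderiv_fun_mul hf hg, add_apply, smul_apply, smul_eq_mul]
  ring

/-- Partial derivatives of a smooth function commute. -/
theorem pder_comm (hU : IsOpen U) (hf : ContDiffOn ℝ (⊤ : ℕ∞) f U) (i j : Fin d) :
    EqOn (pder i (pder j f)) (pder j (pder i f)) U := fun x hx => by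
  have hd : DifferentiableAt ℝ (fderiv ℝ f) x :=
    ((hf.fderiv_of_isOpen (m := (⊤ : ℕ∞)) hU (by simp)).contDiffAt
      (hU.mem_nhds hx)).differentiableAt (by simp)
  have hs : IsSymmSndFDerivAt ℝ f x :=
    (hf.contDiffAt (hU.mem_nhds hx)).isSymmSndFDerivAt <| by
      rw [minSmoothness_of_isRCLikeNormedField]
      exact WithTop.coe_le_coe.2 (le_top : (2 : ℕ∞) ≤ ⊤)
  have hsnd (a b : Fin d) : pder a (pder b f) x =
      fderiv ℝ (fderiv ℝ f) x (EuclideanSpace.single a 1) (EuclideanSpace.single b 1) := by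
    unfold pder
    rw [fderiv_clm_apply hd (differentiableAt_const _)]
    simp
  rw [hsnd, hsnd, hs.eq]

/-- The Laplacian of a smooth function commutes with partial derivatives. -/
theorem lap_pder (hU : IsOpen U) (hf : ContDiffOn ℝ (⊤ : ℕ∞) f U) (i : Fin d) :
    EqOn (lap (pder i f)) (pder i (lap f)) U := fun x hx => by
  have hsum : pder i (lap f) x = ∑ l, pder i (pder l (pder l f)) x := by
    unfold lap
    rw [pder, fderiv_fun_sum fun l _ =>
      ((hf.pder hU l).pder hU l).differentiableAt_of_isOpen hU hx]
    simp [pder]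
  rw [hsum]
  refine Finset.sum_congr rfl fun l _ => ?_
  rw [(pder_comm hU hf l i).pder hU l hx, pder_comm hU (hf.pder hU l) l i hx]

/-- A partial derivative of the Laplacian of a biharmonic function is harmonic. -/
theorem lap_lap_pder_eq_zero (hU : IsOpen U) (hf : ContDiffOn ℝ (⊤ : ℕ∞) f U)
    (hbi : ∀ x ∈ U, bilap f x = 0) (i : Fin d) (hx : x ∈ U) : lap (lap (pder i f)) x = 0 := by
  have hzero : EqOn (lap (lap f)) (fun _ => 0) U := hbi
  rw [(lap_pder hU hf i).lap hU hx, lap_pder hU (hf.lap hU) i hx, hzero.pder hU i hx]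
  simp [pder]

end PartialDerivatives

/-- the pointwise tangential-derivative identity (5.3) used for second
derivatives of biharmonic functions, valid since `Δ²Φ = 0`. -/
theorem tangential_identity_second_derivatives
    (d : ℕ) (U : Set (Euc d)) (hU : IsOpen U) (Φ u : Euc d → ℝ)
    (hΦ : ContDiffOn ℝ (⊤ : ℕ∞) Φ U) (hu : ContDiffOn ℝ (⊤ : ℕ∞) u U)
    (hbi : ∀ x ∈ U, bilap Φ x = 0) (n : Euc d) (j k : Fin d) :
    ∀ x ∈ U,
      (∑ l, n l * pder l (lap (pder j (pder k Φ))) x) * u x -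
        lap (pder j (pder k Φ)) x * (∑ l, n l * pder l u x) =
      ∑ l,
        ((n l * pder j (fun y => pder l (lap (pder k Φ)) y * u y) x -
            n j * pder l (fun y => pder l (lap (pder k Φ)) y * u y) x) -
          (n l * pder k (fun y => pder l (lap Φ) y * pder j u y) x -
            n k * pder l (fun y => pder l (lap Φ) y * pder j u y) x) +
          pder l (lap Φ) x * (n l * pder k (pder j u) x - n k * pder l (pder j u) x) +
          (n j * pder l (fun y => lap (pder k Φ) y * pder l u y) x -
            n l * pder j (fun y => lap (pder k Φ) y * pder l u y) x) -
          lap (pder k Φ) x * (n j * pder l (pder l u) x - n l * pder j (pder l u) x)) := by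
  intro x hx
  have hG := hΦ.lap hU
  have hA := (hΦ.pder hU k).lap hU
  have hAlap : ∑ l, pder l (pder l (lap (pder k Φ))) x = 0 :=
    lap_lap_pder_eq_zero hU hΦ hbi k hx
  have hGlap : ∑ l, pder l (pder l (lap Φ)) x = 0 := hbi x hx
  have hAj := lap_pder hU (hΦ.pder hU k) j
  have hGk (l : Fin d) : pder k (pder l (lap Φ)) x = pder l (lap (pder k Φ)) x := by
    rw [pder_comm hU hG k l hx, (lap_pder hU hΦ k).pder hU l hx]
  have hterm (l : Fin d) :
      (n l * pder j (fun y => pder l (lap (pder k Φ)) y * u y) x -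
          n j * pder l (fun y => pder l (lap (pder k Φ)) y * u y) x) -
        (n l * pder k (fun y => pder l (lap Φ) y * pder j u y) x -
          n k * pder l (fun y => pder l (lap Φ) y * pder j u y) x) +
        pder l (lap Φ) x * (n l * pder k (pder j u) x - n k * pder l (pder j u) x) +
        (n j * pder l (fun y => lap (pder k Φ) y * pder l u y) x -
          n l * pder j (fun y => lap (pder k Φ) y * pder l u y) x) -
        lap (pder k Φ) x * (n j * pder l (pder l u) x - n l * pder j (pder l u) x) =
      n l * pder l (lap (pder j (pder k Φ))) x * u x -
        lap (pder j (pder k Φ)) x * (n l * pder l u x) -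
        n j * u x * pder l (pder l (lap (pder k Φ))) x +
        n k * pder j u x * pder l (pder l (lap Φ)) x := by
    have du := hu.differentiableAt_of_isOpen hU hx
    have dDu (i : Fin d) := (hu.pder hU i).differentiableAt_of_isOpen hU hx
    have dA := hA.differentiableAt_of_isOpen hU hx
    have dDA := (hA.pder hU l).differentiableAt_of_isOpen hU hx
    have dDG := (hG.pder hU l).differentiableAt_of_isOpen hU hx
    simp only [pder_mul dDA du, pder_mul dDG (dDu j), pder_mul dA (dDu l)]
    rw [hAj.pder hU l hx, hAj hx, hGk, pder_comm hU hA j l hx]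
    ring
  simp only [hterm, Finset.sum_add_distrib, Finset.sum_sub_distrib, ← Finset.mul_sum,
    ← Finset.sum_mul, hAlap, hGlap]
  ring

end
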